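/- (Lower bound, d = 1.) Let X_1,…,X_n, Y_1,…,Y_n be independent random variables uniformly distributed on [0,1], with empirical measures μ_n = (1/n)Σ_{k=1}^n δ_{X_k} and ν_n = (1/n)Σ_{k=1}^n δ_{Y_k}. Then E(W₁(μ_n,ν_n)) ≥ (1/n)·E( |Σ_{k=1}^n (X_k − Y_k)| ), and consequently there is an absolute constant c > 0 such that E(W₁(μ_n,ν_n)) ≥ c/√n for all n ≥ 1. -/

import Mathlib

open MeasureTheory ProbabilityTheory Real ENNReal

noncomputable section

/-- `γ` is a coupling of `μ` and `ν`. -/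
def IsCoupling {α : Type*} [MeasurableSpace α]
    (γ : Measure (α × α)) (μ ν : Measure α) : Prop :=
  γ.map Prod.fst = μ ∧ γ.map Prod.snd = ν

/-- Kantorovich distance `W₁` on the real line. -/
def W1 (μ ν : Measure ℝ) : ℝ≥0∞ :=
  ⨅ (γ : Measure (ℝ × ℝ)) (_ : IsCoupling γ μ ν),
    ∫⁻ p, ENNReal.ofReal |p.1 - p.2| ∂γ

/-- The uniform distribution on `[0,1]`. -/
def uniformUnit : Measure ℝ := volume.restrict (Set.Icc 0 1)

/-- The empirical measure `(1/n) Σ_k δ_{X_k(ω)}`. -/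
def empMeasure {n : ℕ} {Ω : Type*} [MeasurableSpace Ω]
    (X : Fin n → Ω → ℝ) (ω : Ω) : Measure ℝ :=
  (n : ℝ≥0∞)⁻¹ • ∑ k, Measure.dirac (X k ω)

/-!
Integrating the `1`-Lipschitz function `x ↦ x` against the marginals of any coupling gives
`|∫ x dμ - ∫ x dν| ≤ W₁(μ, ν)`, which for empirical measures is the first bound.

For the rate, let `S` be a sum of independent centred variables. If every summand satisfies
`E W⁴ ≤ K (E W²)²` for a common `K ≥ 3`, then so does `S`. Hölder's inequality
`(E S²)³ ≤ (E|S|)² E S⁴` turns this into `E S² ≤ K (E|S|)²`, and `E S²` is linear in the number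
of summands. Any nondegenerate law with a finite fourth moment admits such a `K`.
-/

section Kantorovich

variable {α E : Type*} [MeasurableSpace α] [NormedAddCommGroup E] [NormedSpace ℝ E]

lemma IsCoupling.integral_fst_sub_snd {γ : Measure (α × α)} {μ ν : Measure α}
    (hγ : IsCoupling γ μ ν) {f : α → E} (hμ : Integrable f μ) (hν : Integrable f ν) :
    ∫ p, (f p.1 - f p.2) ∂γ = ∫ x, f x ∂μ - ∫ x, f x ∂ν := by
  obtain ⟨rfl, rfl⟩ := hγ
  rw [integral_map measurable_fst.aemeasurable hμ.1, integral_map measurable_snd.aemeasurable hν.1]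
  exact integral_sub (hμ.comp_measurable measurable_fst) (hν.comp_measurable measurable_snd)

lemma enorm_integral_sub_integral_le_W1 {μ ν : Measure ℝ} {f : ℝ → E} (hf : LipschitzWith 1 f)
    (hμ : Integrable f μ) (hν : Integrable f ν) :
    ‖∫ x, f x ∂μ - ∫ x, f x ∂ν‖ₑ ≤ W1 μ ν := by
  refine le_iInf₂ fun γ hγ => ?_
  calc ‖∫ x, f x ∂μ - ∫ x, f x ∂ν‖ₑ
      = ‖∫ p, (f p.1 - f p.2) ∂γ‖ₑ := by rw [hγ.integral_fst_sub_snd hμ hν]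
    _ ≤ ∫⁻ p, ‖f p.1 - f p.2‖ₑ ∂γ := enorm_integral_le_lintegral_enorm _
    _ ≤ ∫⁻ p, ENNReal.ofReal |p.1 - p.2| ∂γ := lintegral_mono fun p => by
        simpa only [edist_eq_enorm_sub, ENNReal.coe_one, one_mul, Real.enorm_eq_ofReal_abs]
          using hf p.1 p.2

end Kantorovich

section Empirical

variable {Ω E : Type*} [MeasurableSpace Ω] [NormedAddCommGroup E] {n : ℕ}

lemma integrable_empMeasure (X : Fin n → Ω → ℝ) (ω : Ω) (f : ℝ → E) :
    Integrable f (empMeasure X ω) := by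
  rcases eq_or_ne n 0 with rfl | hn
  · simp [empMeasure]
  · refine Integrable.smul_measure ?_ (by simpa using hn)
    exact integrable_finsetSum_measure.2 fun k _ => integrable_dirac enorm_lt_top

lemma integral_empMeasure [NormedSpace ℝ E] [CompleteSpace E] (X : Fin n → Ω → ℝ) (ω : Ω)
    (f : ℝ → E) : ∫ x, f x ∂empMeasure X ω = (n : ℝ)⁻¹ • ∑ k, f (X k ω) := by
  rw [empMeasure, integral_smul_measure,
    integral_finsetSum_measure fun k _ => integrable_dirac enorm_lt_top]
  simp

lemma enorm_inv_mul_sum_sub_le_W1_empMeasure (X Y : Fin n → Ω → ℝ) (ω : Ω) :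
    ‖(n : ℝ)⁻¹ * ∑ k, (X k ω - Y k ω)‖ₑ ≤ W1 (empMeasure X ω) (empMeasure Y ω) := by
  have h := enorm_integral_sub_integral_le_W1 LipschitzWith.id
    (integrable_empMeasure X ω id) (integrable_empMeasure Y ω id)
  simpa only [integral_empMeasure, id, smul_eq_mul, ← mul_sub, ← Finset.sum_sub_distrib] using h

lemma ofReal_integral_abs_sum_sub_le_lintegral_W1 {P : Measure Ω} {X Y : Fin n → Ω → ℝ}
    (hX : ∀ k, Integrable (X k) P) (hY : ∀ k, Integrable (Y k) P) :
    ENNReal.ofReal ((1 / n : ℝ) * ∫ ω, |∑ k, (X k ω - Y k ω)| ∂P)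
      ≤ ∫⁻ ω, W1 (empMeasure X ω) (empMeasure Y ω) ∂P := by
  have hint : Integrable (fun ω => (n : ℝ)⁻¹ * ∑ k, (X k ω - Y k ω)) P :=
    (integrable_finsetSum _ fun k _ => (hX k).sub (hY k)).const_mul _
  calc ENNReal.ofReal ((1 / n : ℝ) * ∫ ω, |∑ k, (X k ω - Y k ω)| ∂P)
      = ENNReal.ofReal (∫ ω, ‖(n : ℝ)⁻¹ * ∑ k, (X k ω - Y k ω)‖ ∂P) := by
        simp only [norm_mul, norm_inv, RCLike.norm_natCast, integral_const_mul, one_div,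
          Real.norm_eq_abs]
    _ = ∫⁻ ω, ‖(n : ℝ)⁻¹ * ∑ k, (X k ω - Y k ω)‖ₑ ∂P :=
        ofReal_integral_norm_eq_lintegral_enorm hint
    _ ≤ ∫⁻ ω, W1 (empMeasure X ω) (empMeasure Y ω) ∂P :=
        lintegral_mono (enorm_inv_mul_sum_sub_le_W1_empMeasure X Y)

end Empirical

section FirstMoment

variable {α : Type*} [MeasurableSpace α] {μ : Measure α}

lemma lintegral_sq_pow_three_le {f : α → ℝ≥0∞} (hf : AEMeasurable f μ) :
    (∫⁻ x, f x ^ 2 ∂μ) ^ 3 ≤ (∫⁻ x, f x ∂μ) ^ 2 * ∫⁻ x, f x ^ 4 ∂μ := by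
  have split (a : ℝ≥0∞) : a ^ 2 = a ^ (2 / 3 : ℝ) * (a ^ 4) ^ (1 / 3 : ℝ) := by
    rw [← ENNReal.rpow_natCast, ← ENNReal.rpow_natCast, ← ENNReal.rpow_mul,
      ← ENNReal.rpow_add_of_nonneg _ _ (by norm_num) (by norm_num)]
    norm_num
  have holder : ∫⁻ x, f x ^ 2 ∂μ
      ≤ (∫⁻ x, f x ∂μ) ^ (2 / 3 : ℝ) * (∫⁻ x, f x ^ 4 ∂μ) ^ (1 / 3 : ℝ) := by
    simp only [split]
    exact ENNReal.lintegral_mul_norm_pow_le hf (hf.pow_const 4) (by norm_num) (by norm_num)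
      (by norm_num)
  calc (∫⁻ x, f x ^ 2 ∂μ) ^ 3
      ≤ ((∫⁻ x, f x ∂μ) ^ (2 / 3 : ℝ) * (∫⁻ x, f x ^ 4 ∂μ) ^ (1 / 3 : ℝ)) ^ 3 := by gcongr
    _ = (∫⁻ x, f x ∂μ) ^ 2 * ∫⁻ x, f x ^ 4 ∂μ := by
        rw [mul_pow, ← ENNReal.rpow_mul_natCast, ← ENNReal.rpow_mul_natCast]
        norm_num

lemma integral_sq_pow_three_le {f : α → ℝ} (hf : Integrable f μ)
    (hf4 : Integrable (fun x => f x ^ 4) μ) :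
    (∫ x, f x ^ 2 ∂μ) ^ 3 ≤ (∫ x, |f x| ∂μ) ^ 2 * ∫ x, f x ^ 4 ∂μ := by
  have integral_even_pow {k : ℕ} (hk : Even k) :
      ∫ x, f x ^ k ∂μ = (∫⁻ x, ‖f x‖ₑ ^ k ∂μ).toReal := by
    simpa only [Pi.pow_apply, enorm_pow, norm_pow, Real.norm_eq_abs, hk.pow_abs]
      using integral_norm_eq_lintegral_enorm (hf.1.pow k)
  have hfin : ∫⁻ x, ‖f x‖ₑ ^ 4 ∂μ ≠ ∞ := by
    simpa only [enorm_pow] using hf4.2.ne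
  simp only [integral_even_pow even_two, integral_even_pow (k := 4) (by decide),
    ← Real.norm_eq_abs, integral_norm_eq_lintegral_enorm hf.1]
  rw [← ENNReal.toReal_pow, ← ENNReal.toReal_pow, ← ENNReal.toReal_mul]
  exact ENNReal.toReal_mono (ENNReal.mul_ne_top (ENNReal.pow_ne_top hf.2.ne) hfin)
    (lintegral_sq_pow_three_le hf.1.enorm)

lemma integral_sq_le_mul_sq_integral_abs {f : α → ℝ} (hf : Integrable f μ)
    (hf4 : Integrable (fun x => f x ^ 4) μ) {K : ℝ} (hK : 0 ≤ K)
    (hkurt : ∫ x, f x ^ 4 ∂μ ≤ K * (∫ x, f x ^ 2 ∂μ) ^ 2) :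
    ∫ x, f x ^ 2 ∂μ ≤ K * (∫ x, |f x| ∂μ) ^ 2 := by
  have hsq : 0 ≤ ∫ x, f x ^ 2 ∂μ := integral_nonneg fun x => sq_nonneg (f x)
  rcases hsq.eq_or_lt with hzero | hpos
  · rw [← hzero]
    positivity
  · refine le_of_mul_le_mul_right ?_ (pow_pos hpos 2)
    calc (∫ x, f x ^ 2 ∂μ) * (∫ x, f x ^ 2 ∂μ) ^ 2
        = (∫ x, f x ^ 2 ∂μ) ^ 3 := by ring
      _ ≤ (∫ x, |f x| ∂μ) ^ 2 * ∫ x, f x ^ 4 ∂μ := integral_sq_pow_three_le hf hf4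
      _ ≤ (∫ x, |f x| ∂μ) ^ 2 * (K * (∫ x, f x ^ 2 ∂μ) ^ 2) := by gcongr
      _ = K * (∫ x, |f x| ∂μ) ^ 2 * (∫ x, f x ^ 2 ∂μ) ^ 2 := by ring

end FirstMoment

section IndependentSums

variable {Ω : Type*} [MeasurableSpace Ω] {P : Measure Ω}

lemma integrable_pow_of_memLp [IsFiniteMeasure P] {X : Ω → ℝ} {m n : ℕ} (hX : MemLp X n P)
    (hmn : m ≤ n) : Integrable (fun ω => X ω ^ m) P := by
  have hXm : MemLp X m P := hX.mono_exponent (by exact_mod_cast hmn)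
  refine (integrable_norm_iff (hX.1.pow m)).1 ?_
  simpa only [Pi.pow_apply, norm_pow] using hXm.integrable_norm_pow'

lemma integral_add_pow_of_indepFun [IsFiniteMeasure P] {X Y : Ω → ℝ} {n : ℕ}
    (hXY : IndepFun X Y P) (hX : MemLp X n P) (hY : MemLp Y n P) :
    ∫ ω, (X ω + Y ω) ^ n ∂P =
      ∑ m ∈ Finset.range (n + 1), (∫ ω, X ω ^ m ∂P) * (∫ ω, Y ω ^ (n - m) ∂P) * n.choose m := by
  have indep_pow (j k : ℕ) : IndepFun (fun ω => X ω ^ j) (fun ω => Y ω ^ k) P :=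
    hXY.comp (measurable_id.pow_const j) (measurable_id.pow_const k)
  simp only [add_pow]
  rw [integral_finsetSum]
  · refine Finset.sum_congr rfl fun m _ => ?_
    rw [integral_mul_const,
      (indep_pow m (n - m)).integral_fun_mul_eq_mul_integral (hX.1.pow m) (hY.1.pow (n - m))]
  · intro m hm
    exact ((indep_pow m (n - m)).integrable_mul
      (integrable_pow_of_memLp hX (Finset.mem_range_succ_iff.1 hm))
      (integrable_pow_of_memLp hY (n.sub_le m))).mul_const _

lemma integral_add_pow_four_le_of_indepFun [IsProbabilityMeasure P] {X Y : Ω → ℝ} {K : ℝ}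
    (hK : 3 ≤ K) (hXY : IndepFun X Y P) (hX : MemLp X 4 P) (hY : MemLp Y 4 P)
    (hX0 : ∫ ω, X ω ∂P = 0) (hY0 : ∫ ω, Y ω ∂P = 0)
    (hXK : ∫ ω, X ω ^ 4 ∂P ≤ K * (∫ ω, X ω ^ 2 ∂P) ^ 2)
    (hYK : ∫ ω, Y ω ^ 4 ∂P ≤ K * (∫ ω, Y ω ^ 2 ∂P) ^ 2) :
    ∫ ω, (X ω + Y ω) ^ 4 ∂P ≤ K * (∫ ω, (X ω + Y ω) ^ 2 ∂P) ^ 2 := by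
  have fourth : ∫ ω, (X ω + Y ω) ^ 4 ∂P =
      ∫ ω, Y ω ^ 4 ∂P + (∫ ω, X ω ^ 2 ∂P) * (∫ ω, Y ω ^ 2 ∂P) * 6 + ∫ ω, X ω ^ 4 ∂P := by
    rw [integral_add_pow_of_indepFun hXY (by exact_mod_cast hX) (by exact_mod_cast hY)]
    simp [Finset.sum_range_succ, hX0, hY0, Nat.choose]
  have second : ∫ ω, (X ω + Y ω) ^ 2 ∂P = ∫ ω, Y ω ^ 2 ∂P + ∫ ω, X ω ^ 2 ∂P := by
    rw [integral_add_pow_of_indepFun hXY (hX.mono_exponent (by norm_num))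
      (hY.mono_exponent (by norm_num))]
    simp [Finset.sum_range_succ, hX0, hY0]
  have cross_nonneg : 0 ≤ (∫ ω, X ω ^ 2 ∂P) * ∫ ω, Y ω ^ 2 ∂P :=
    mul_nonneg (integral_nonneg fun ω => sq_nonneg _) (integral_nonneg fun ω => sq_nonneg _)
  rw [fourth, second]
  -- The cross term of the fourth moment has coefficient `6 ≤ 2 * K`.
  nlinarith [mul_le_mul_of_nonneg_right hK cross_nonneg]

variable {ι : Type*} {W : ι → Ω → ℝ}

lemma integral_sum_eq_zero (hW : ∀ i, Integrable (W i) P) (hW0 : ∀ i, ∫ ω, W i ω ∂P = 0)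
    (s : Finset ι) : ∫ ω, ∑ i ∈ s, W i ω ∂P = 0 := by
  rw [integral_finsetSum s fun i _ => hW i]
  exact Finset.sum_eq_zero fun i _ => hW0 i

lemma integral_sum_pow_four_le_of_iIndepFun {K : ℝ} (hK : 3 ≤ K) (hW : iIndepFun W P)
    (hW4 : ∀ i, MemLp (W i) 4 P) (hW0 : ∀ i, ∫ ω, W i ω ∂P = 0)
    (hWK : ∀ i, ∫ ω, W i ω ^ 4 ∂P ≤ K * (∫ ω, W i ω ^ 2 ∂P) ^ 2) (s : Finset ι) :
    ∫ ω, (∑ i ∈ s, W i ω) ^ 4 ∂P ≤ K * (∫ ω, (∑ i ∈ s, W i ω) ^ 2 ∂P) ^ 2 := by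
  classical
  have := hW.isProbabilityMeasure
  induction s using Finset.induction_on with
  | empty => simp
  | insert i s hi ih =>
    have hindep : IndepFun (W i) (fun ω => ∑ j ∈ s, W j ω) P := by
      simpa only [Finset.sum_fn] using
        (hW.indepFun_finsetSum_of_notMem₀ (fun j => (hW4 j).1.aemeasurable) hi).symm
    have hmean : ∫ ω, ∑ j ∈ s, W j ω ∂P = 0 :=
      integral_sum_eq_zero (fun j => (hW4 j).integrable (by norm_num)) hW0 s
    simp only [Finset.sum_insert hi]
    exact integral_add_pow_four_le_of_indepFun hK hindep (hW4 i)
      (memLp_finsetSum s fun j _ => hW4 j) (hW0 i) hmean (hWK i) ih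

lemma integral_sum_sq_of_iIndepFun (hW : iIndepFun W P) (hW2 : ∀ i, MemLp (W i) 2 P)
    (hW0 : ∀ i, ∫ ω, W i ω ∂P = 0) (s : Finset ι) :
    ∫ ω, (∑ i ∈ s, W i ω) ^ 2 ∂P = ∑ i ∈ s, ∫ ω, W i ω ^ 2 ∂P := by
  have := hW.isProbabilityMeasure
  have hmean : ∫ ω, (∑ i ∈ s, W i) ω ∂P = 0 := by
    simp only [Finset.sum_apply]
    exact integral_sum_eq_zero (fun i => (hW2 i).integrable (by norm_num)) hW0 s
  have hvar := IndepFun.variance_sum (s := s) (fun i _ => hW2 i)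
    fun i _ j _ hij => hW.indepFun hij
  rw [variance_of_integral_eq_zero
    (memLp_finsetSum' s fun i _ => hW2 i).1.aemeasurable hmean] at hvar
  simpa only [Finset.sum_apply,
    variance_of_integral_eq_zero (hW2 _).1.aemeasurable (hW0 _)] using hvar

lemma sum_integral_sq_le_mul_sq_integral_abs_sum {K : ℝ} (hK : 3 ≤ K) (hW : iIndepFun W P)
    (hW4 : ∀ i, MemLp (W i) 4 P) (hW0 : ∀ i, ∫ ω, W i ω ∂P = 0)
    (hWK : ∀ i, ∫ ω, W i ω ^ 4 ∂P ≤ K * (∫ ω, W i ω ^ 2 ∂P) ^ 2) (s : Finset ι) :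
    ∑ i ∈ s, ∫ ω, W i ω ^ 2 ∂P ≤ K * (∫ ω, |∑ i ∈ s, W i ω| ∂P) ^ 2 := by
  have := hW.isProbabilityMeasure
  have hsum : MemLp (fun ω => ∑ i ∈ s, W i ω) (4 : ℕ) P :=
    memLp_finsetSum s fun i _ => by exact_mod_cast hW4 i
  rw [← integral_sum_sq_of_iIndepFun hW (fun i => (hW4 i).mono_exponent (by norm_num)) hW0 s]
  exact integral_sq_le_mul_sq_integral_abs (hsum.integrable (by norm_num))
    (integrable_pow_of_memLp hsum le_rfl) (by linarith)
    (integral_sum_pow_four_le_of_iIndepFun hK hW hW4 hW0 hWK s)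

end IndependentSums

section Law

variable {Ω E : Type*} [MeasurableSpace Ω] [MeasurableSpace E] {P : Measure Ω} {ρ : Measure E}
  {Z : Ω → E}

lemma hasLaw_of_map_eq [NeZero ρ] (hZ : P.map Z = ρ) : HasLaw Z ρ P :=
  ⟨AEMeasurable.of_map_ne_zero (hZ ▸ NeZero.ne ρ), hZ⟩

lemma memLp_of_hasLaw [NormedAddCommGroup E] {p : ℝ≥0∞} (hZ : HasLaw Z ρ P)
    (hρ : MemLp id p ρ) : MemLp Z p P := by
  rw [← hZ.map_eq] at hρ
  exact (memLp_map_measure_iff hρ.1 hZ.aemeasurable).1 hρ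

end Law

section IdenticallyDistributed

variable {Ω ι : Type*} [MeasurableSpace Ω] {P : Measure Ω} {ρ : Measure ℝ} {K : ℝ}

lemma integral_mul_sub_mean_pow_of_hasLaw {Z : Ω → ℝ} (hZ : HasLaw Z ρ P) (a : ℝ) (p : ℕ) :
    ∫ ω, (a * (Z ω - ∫ x, x ∂ρ)) ^ p ∂P = a ^ p * centralMoment id p ρ := by
  simp only [mul_pow, integral_const_mul]
  exact congrArg (a ^ p * ·) (hZ.integral_comp (f := fun x => (x - ∫ y, y ∂ρ) ^ p) (by fun_prop))

lemma sum_sq_mul_variance_le_mul_sq_integral_abs {Z : ι → Ω → ℝ} (hK : 3 ≤ K)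
    (hρ : MemLp id 4 ρ) (hρK : centralMoment id 4 ρ ≤ K * Var[id; ρ] ^ 2)
    (hZ : iIndepFun Z P) (hlaw : ∀ i, HasLaw (Z i) ρ P) (a : ι → ℝ) (s : Finset ι) :
    (∑ i ∈ s, a i ^ 2) * Var[id; ρ]
      ≤ K * (∫ ω, |∑ i ∈ s, a i * (Z i ω - ∫ x, x ∂ρ)| ∂P) ^ 2 := by
  have hP := hZ.isProbabilityMeasure
  have indep : iIndepFun (fun i ω => a i * (Z i ω - ∫ x, x ∂ρ)) P :=
    hZ.comp (fun i x => a i * (x - ∫ y, y ∂ρ)) fun i => by fun_prop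
  have memLp_four (i) : MemLp (fun ω => a i * (Z i ω - ∫ x, x ∂ρ)) 4 P :=
    ((memLp_of_hasLaw (hlaw i) hρ).sub (memLp_const _)).const_mul _
  have mean_zero (i) : ∫ ω, a i * (Z i ω - ∫ x, x ∂ρ) ∂P = 0 := by
    have := (hlaw i).isProbabilityMeasure_iff.1 hP
    simpa only [pow_one, centralMoment_one, mul_zero]
      using integral_mul_sub_mean_pow_of_hasLaw (hlaw i) (a i) 1
  have second_moment (i) : ∫ ω, (a i * (Z i ω - ∫ x, x ∂ρ)) ^ 2 ∂P = a i ^ 2 * Var[id; ρ] := by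
    rw [integral_mul_sub_mean_pow_of_hasLaw (hlaw i),
      centralMoment_two_eq_variance aemeasurable_id]
  have kurtosis (i) : ∫ ω, (a i * (Z i ω - ∫ x, x ∂ρ)) ^ 4 ∂P
      ≤ K * (∫ ω, (a i * (Z i ω - ∫ x, x ∂ρ)) ^ 2 ∂P) ^ 2 := by
    calc ∫ ω, (a i * (Z i ω - ∫ x, x ∂ρ)) ^ 4 ∂P
        = a i ^ 4 * centralMoment id 4 ρ := integral_mul_sub_mean_pow_of_hasLaw (hlaw i) _ _
      _ ≤ a i ^ 4 * (K * Var[id; ρ] ^ 2) := by gcongr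
      _ = K * (∫ ω, (a i * (Z i ω - ∫ x, x ∂ρ)) ^ 2 ∂P) ^ 2 := by rw [second_moment]; ring
  simpa only [second_moment, ← Finset.sum_mul] using
    sum_integral_sq_le_mul_sq_integral_abs_sum hK indep memLp_four mean_zero kurtosis s

lemma two_mul_card_mul_variance_le_mul_sq_integral_abs_sum_sub [Fintype ι] {X Y : ι → Ω → ℝ}
    (hK : 3 ≤ K) (hρ : MemLp id 4 ρ) (hρK : centralMoment id 4 ρ ≤ K * Var[id; ρ] ^ 2)
    (hXY : iIndepFun (Sum.elim X Y) P) (hX : ∀ k, HasLaw (X k) ρ P)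
    (hY : ∀ k, HasLaw (Y k) ρ P) :
    2 * Fintype.card ι * Var[id; ρ] ≤ K * (∫ ω, |∑ k, (X k ω - Y k ω)| ∂P) ^ 2 := by
  have h := sum_sq_mul_variance_le_mul_sq_integral_abs hK hρ hρK hXY
    (Sum.forall.2 ⟨hX, hY⟩) (Sum.elim 1 (-1)) Finset.univ
  have sum_eq (ω : Ω) : ∑ k, (X k ω - ∫ x, x ∂ρ) + ∑ k, -(Y k ω - ∫ x, x ∂ρ)
      = ∑ k, (X k ω - Y k ω) := by
    rw [← Finset.sum_add_distrib]
    exact Finset.sum_congr rfl fun k _ => by ring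
  simpa [-neg_sub, -Finset.sum_neg_distrib, -Finset.sum_sub_distrib, sum_eq, two_mul] using h

lemma ofReal_sqrt_variance_div_sqrt_le_lintegral_W1 {n : ℕ} (hn : 1 ≤ n)
    {X Y : Fin n → Ω → ℝ} (hK : 3 ≤ K) (hρ : MemLp id 4 ρ)
    (hρK : centralMoment id 4 ρ ≤ K * Var[id; ρ] ^ 2) (hXY : iIndepFun (Sum.elim X Y) P)
    (hX : ∀ k, HasLaw (X k) ρ P) (hY : ∀ k, HasLaw (Y k) ρ P) :
    ENNReal.ofReal (√(2 * Var[id; ρ] / K) / √n)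
      ≤ ∫⁻ ω, W1 (empMeasure X ω) (empMeasure Y ω) ∂P := by
  have := hXY.isProbabilityMeasure
  have integrable_of_law {Z : Ω → ℝ} (hZ : HasLaw Z ρ P) : Integrable Z P :=
    (memLp_of_hasLaw hZ hρ).integrable (by norm_num)
  refine le_trans (ENNReal.ofReal_le_ofReal ?_) (ofReal_integral_abs_sum_sub_le_lintegral_W1
    (fun k => integrable_of_law (hX k)) (fun k => integrable_of_law (hY k)))
  have hn0 : (0 : ℝ) < n := by exact_mod_cast hn
  have hbound := two_mul_card_mul_variance_le_mul_sq_integral_abs_sum_sub hK hρ hρK hXY hX hY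
  rw [Fintype.card_fin] at hbound
  rw [← Real.sqrt_div' _ hn0.le]
  refine Real.sqrt_le_iff.2 ⟨by positivity, ?_⟩
  rw [div_div, div_le_iff₀ (by positivity)]
  calc 2 * Var[id; ρ] = 2 * n * Var[id; ρ] / n := by field_simp
    _ ≤ K * (∫ ω, |∑ k, (X k ω - Y k ω)| ∂P) ^ 2 / n := by gcongr
    _ = (1 / n * ∫ ω, |∑ k, (X k ω - Y k ω)| ∂P) ^ 2 * (K * n) := by field_simp

end IdenticallyDistributed

theorem W1_lower_bound_dim_one_general.{u} :
    (∀ (n : ℕ) (Ω : Type u) (_ : MeasurableSpace Ω) (P : Measure Ω) (X Y : Fin n → Ω → ℝ),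
        (∀ k, Integrable (X k) P) →
        (∀ k, Integrable (Y k) P) →
        ENNReal.ofReal ((1 / n : ℝ) * ∫ ω, |∑ k, (X k ω - Y k ω)| ∂P)
          ≤ ∫⁻ ω, W1 (empMeasure X ω) (empMeasure Y ω) ∂P) ∧
    ∀ (ρ : Measure ℝ) [IsProbabilityMeasure ρ], MemLp id 4 ρ → Var[id; ρ] ≠ 0 →
      ∃ c : ℝ, 0 < c ∧
        ∀ (n : ℕ), 1 ≤ n →
        ∀ (Ω : Type u) (_ : MeasurableSpace Ω) (P : Measure Ω) (X Y : Fin n → Ω → ℝ),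
          iIndepFun (Sum.elim X Y) P →
          (∀ k, P.map (X k) = ρ) →
          (∀ k, P.map (Y k) = ρ) →
          ENNReal.ofReal (c / √n) ≤ ∫⁻ ω, W1 (empMeasure X ω) (empMeasure Y ω) ∂P := by
  refine ⟨fun n Ω _ P X Y => ofReal_integral_abs_sum_sub_le_lintegral_W1, fun ρ _ hρ hvar => ?_⟩
  have hvar_pos : 0 < Var[id; ρ] := (variance_nonneg id ρ).lt_of_ne' hvar
  obtain ⟨K, hK, hKρ⟩ : ∃ K : ℝ, 3 ≤ K ∧ centralMoment id 4 ρ / Var[id; ρ] ^ 2 ≤ K :=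
    ⟨max 3 _, le_max_left _ _, le_max_right _ _⟩
  refine ⟨√(2 * Var[id; ρ] / K), by positivity, fun n hn Ω _ P X Y hXY hX hY => ?_⟩
  exact ofReal_sqrt_variance_div_sqrt_le_lintegral_W1 hn hK hρ
    ((div_le_iff₀ (pow_pos hvar_pos 2)).1 hKρ) hXY
    (fun k => hasLaw_of_map_eq (hX k)) (fun k => hasLaw_of_map_eq (hY k))

instance : IsProbabilityMeasure uniformUnit := ⟨by simp [uniformUnit]⟩

lemma memLp_id_uniformUnit (p : ℝ≥0∞) : MemLp id p uniformUnit :=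
  MemLp.of_bound aestronglyMeasurable_id 1 <| (ae_restrict_mem measurableSet_Icc).mono
    fun x hx => by simpa [abs_of_nonneg hx.1] using hx.2

lemma variance_id_uniformUnit : Var[id; uniformUnit] = 1 / 12 := by
  rw [variance_eq_sub (memLp_id_uniformUnit 2)]
  simp only [uniformUnit, integral_Icc_eq_integral_Ioc, Pi.pow_apply, id,
    ← intervalIntegral.integral_of_le zero_le_one, integral_id, integral_pow]
  norm_num

lemma integrable_of_map_eq_uniformUnit {Ω : Type*} [MeasurableSpace Ω] {P : Measure Ω}
    {Z : Ω → ℝ} (hZ : P.map Z = uniformUnit) : Integrable Z P :=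
  memLp_one_iff_integrable.1 (memLp_of_hasLaw (hasLaw_of_map_eq hZ) (memLp_id_uniformUnit 1))

/-- Lower bound in dimension one: `E(W₁(μ_n,ν_n)) ≥ (1/n) E|Σ_k (X_k − Y_k)|`, and
consequently `E(W₁(μ_n,ν_n)) ≥ c/√n` for an absolute constant `c > 0`. -/
theorem W1_lower_bound_dim_one :
    (∀ (n : ℕ) (Ω : Type) (_ : MeasurableSpace Ω) (P : Measure Ω),
      IsProbabilityMeasure P →
      ∀ (X Y : Fin n → Ω → ℝ),
        iIndepFun (Sum.elim X Y) P →
        (∀ k, P.map (X k) = uniformUnit) →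
        (∀ k, P.map (Y k) = uniformUnit) →
        ENNReal.ofReal ((1 / n : ℝ) * ∫ ω, |∑ k, (X k ω - Y k ω)| ∂P)
          ≤ ∫⁻ ω, W1 (empMeasure X ω) (empMeasure Y ω) ∂P) ∧
    ∃ c : ℝ, 0 < c ∧
      ∀ (n : ℕ), 1 ≤ n →
      ∀ (Ω : Type) (_ : MeasurableSpace Ω) (P : Measure Ω), IsProbabilityMeasure P →
      ∀ (X Y : Fin n → Ω → ℝ),
        iIndepFun (Sum.elim X Y) P →
        (∀ k, P.map (X k) = uniformUnit) →
        (∀ k, P.map (Y k) = uniformUnit) →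
        ENNReal.ofReal (c / Real.sqrt n)
          ≤ ∫⁻ ω, W1 (empMeasure X ω) (empMeasure Y ω) ∂P := by
  obtain ⟨c, hc, hbound⟩ := W1_lower_bound_dim_one_general.2 uniformUnit
    (memLp_id_uniformUnit 4) (by norm_num [variance_id_uniformUnit])
  exact ⟨fun n Ω _ P _ X Y _ hX hY => W1_lower_bound_dim_one_general.1 n Ω _ P X Y
    (fun k => integrable_of_map_eq_uniformUnit (hX k))
    (fun k => integrable_of_map_eq_uniformUnit (hY k)),
    c, hc, fun n hn Ω _ P _ => hbound n hn Ω _ P⟩
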